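/- Let n ≥ 0 be an integer, 0 ≤ ν ≤ n, and x ∈ ℝ³ \ {0}. Then Σ_{μ = max(−ν, −(n−ν))}^{min(ν, n−ν)} (4π/(2(n−ν)+1)) · C(n, ν−μ) · C(n, ν+μ) · ‖x‖^{2(n−ν)} · |Y_{n−ν}^{−μ}(x/‖x‖)|² ≤ (C(n,ν) · ‖x‖^{n−ν})². -/

import Mathlib

/-!
Put `k = n - ν`. Log-concavity of the binomial coefficients gives
`C(n,ν-μ) C(n,ν+μ) ≤ C(n,ν)²` (`choose_mul_choose_le`), so after enlarging the range of `μ` to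
`-k, …, k` it suffices to have the addition theorem on the diagonal,
`∑_m |Y_k^m(ξ)|² = (2k+1)/(4π)` for unit `ξ` (`sum_norm_sq_sphHarm`).

The terms of order `m` and `-m` agree, so with `P` the Legendre polynomial of degree `k` and
`a_m = (k-m)!/(k+m)!` this says that the polynomial
`P² + 2 ∑_{m=1}^k a_m (1-X²)^m (P^{(m)})²` is the constant `1`. By the differentiated Legendre
equation, the derivative of its partial sum up to `m = j` is `2 a_j (1-X²)^j P^{(j)} P^{(j+1)}`
(`derivative_partial_sum`). This vanishes for `j = k` since `P` has degree at most `k`, and the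
value of the constant is read off at `X = 1`, where `P(1) = 1`.
-/

open MeasureTheory Metric Filter Asymptotics Real

noncomputable section

namespace Paper

/-- `E3` is three-dimensional Euclidean space `ℝ³`. -/
abbrev E3 : Type := EuclideanSpace ℝ (Fin 3)

/-- The Legendre polynomial of degree `n`, via Rodrigues' formula. -/
def legendreP (n : ℕ) (x : ℝ) : ℝ :=
  (1 / ((2 : ℝ) ^ n * n.factorial)) * iteratedDeriv n (fun t : ℝ => (t ^ 2 - 1) ^ n) x

/-- The associated Legendre function `P_n^m` for natural-number order `m`. -/
def assocLegendreNat (n m : ℕ) (x : ℝ) : ℝ :=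
  (-1 : ℝ) ^ m * (1 - x ^ 2) ^ ((m : ℝ) / 2) * iteratedDeriv m (legendreP n) x

/-- The associated Legendre function `P_n^m` for integer order `m`. -/
def assocLegendre (n : ℕ) (m : ℤ) (x : ℝ) : ℝ :=
  if 0 ≤ m then assocLegendreNat n m.toNat x
  else
    (-1 : ℝ) ^ (-m).toNat *
      (((n - (-m).toNat).factorial : ℝ) / ((n + (-m).toNat).factorial : ℝ)) *
      assocLegendreNat n (-m).toNat x

/-- The normalization constant `A_n^m = √((2n+1)/(4π) · (n−m)!/(n+m)!)`. -/
def normA (n : ℕ) (m : ℤ) : ℝ :=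
  Real.sqrt ((2 * n + 1) / (4 * π) *
    ((((n : ℤ) - m).toNat.factorial : ℝ) / (((n : ℤ) + m).toNat.factorial : ℝ)))

/-- The spherical harmonic `Y_n^m`, viewed as a function of a unit vector `ξ ∈ S²`:
`Y_n^m(ξ) = A_n^m e^{imφ} P_n^m(cos θ)`, where `cos θ = ξ₃` and `φ` is the azimuthal
angle of `ξ`. -/
def sphHarm (n : ℕ) (m : ℤ) (ξ : E3) : ℂ :=
  ((normA n m : ℝ) : ℂ) *
    Complex.exp ((m : ℂ) * ((Complex.arg ((ξ 0 : ℂ) + (ξ 1 : ℂ) * Complex.I) : ℝ) : ℂ) *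
      Complex.I) *
    ((assocLegendre n m (ξ 2) : ℝ) : ℂ)

/-- The regular solid harmonic `R_n^m(x) = ‖x‖^n Y_n^m(x/‖x‖)` (with `R_n^m(0) = 0` for
`n > 0` and `R_0^0 ≡ 1/√(4π)`; these values are produced automatically at `x = 0`). -/
def solidR (n : ℕ) (m : ℤ) (x : E3) : ℂ :=
  ((‖x‖ ^ n : ℝ) : ℂ) * sphHarm n m (‖x‖⁻¹ • x)

/-- The irregular solid harmonic `I_n^m(x) = ‖x‖^{-(n+1)} Y_n^m(x/‖x‖)` (for `x ≠ 0`). -/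
def solidI (n : ℕ) (m : ℤ) (x : E3) : ℂ :=
  (((‖x‖ ^ (n + 1))⁻¹ : ℝ) : ℂ) * sphHarm n m (‖x‖⁻¹ • x)

/-- The unit sphere `S² ⊂ ℝ³`. -/
def S2 : Set E3 := Metric.sphere (0 : E3) 1

/-- Surface integral over the unit sphere (with respect to two-dimensional Hausdorff
measure, which is the surface measure `dS`). -/
def sphereIntegral (g : E3 → ℂ) : ℂ := ∫ ξ in S2, g ξ ∂μH[2]

/-- The local coefficient `L_n^m = ρ^{-n} ∫_{S²} f(c + ρξ) conj(Y_n^m(ξ)) dS(ξ)`. -/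
def localCoeff (c : E3) (ρ : ℝ) (f : E3 → ℂ) (n : ℕ) (m : ℤ) : ℂ :=
  (((ρ ^ n)⁻¹ : ℝ) : ℂ) *
    sphereIntegral (fun ξ => f (c + ρ • ξ) * (starRingEnd ℂ) (sphHarm n m ξ))

/-- The `p`-th order local expansion `L_c^p[f](x) = Σ_{n=0}^p Σ_{m=-n}^n L_n^m R_n^m(x-c)`
of `f` centered at `c`, with coefficients computed on the sphere of radius `ρ` about `c`. -/
def localExp (c : E3) (ρ : ℝ) (f : E3 → ℂ) (p : ℕ) (x : E3) : ℂ :=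
  ∑ n ∈ Finset.range (p + 1), ∑ m ∈ Finset.Icc (-(n : ℤ)) (n : ℤ),
    localCoeff c ρ f n m * solidR n m (x - c)

/-- The multipole coefficient `M_n^m = ρ^{n+1} ∫_{S²} g(c + ρξ) conj(Y_n^m(ξ)) dS(ξ)`. -/
def mpoleCoeff (c : E3) (ρ : ℝ) (g : E3 → ℂ) (n : ℕ) (m : ℤ) : ℂ :=
  ((ρ ^ (n + 1) : ℝ) : ℂ) *
    sphereIntegral (fun ξ => g (c + ρ • ξ) * (starRingEnd ℂ) (sphHarm n m ξ))

/-- The `p`-th order multipole expansion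
`M_c^p[g](x) = Σ_{n=0}^p Σ_{m=-n}^n M_n^m I_n^m(x-c)` of `g` centered at `c`. -/
def mpoleExp (c : E3) (ρ : ℝ) (g : E3 → ℂ) (p : ℕ) (x : E3) : ℂ :=
  ∑ n ∈ Finset.range (p + 1), ∑ m ∈ Finset.Icc (-(n : ℤ)) (n : ℤ),
    mpoleCoeff c ρ g n m * solidI n m (x - c)

/-- `f` is harmonic on a set `s` if it is twice continuously differentiable there and its
Laplacian (sum of pure second derivatives along the coordinate directions) vanishes. -/
def IsHarmonicOn (f : E3 → ℂ) (s : Set E3) : Prop :=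
  ContDiffOn ℝ 2 f s ∧ ∀ x ∈ s,
    ∑ i : Fin 3,
      iteratedFDeriv ℝ 2 f x
        ![EuclideanSpace.single i (1 : ℝ), EuclideanSpace.single i (1 : ℝ)] = 0

/-- The point potential `φ_s(x) = 1/‖x - s‖` due to a unit-strength source at `s`. -/
def pointPot (s : E3) (x : E3) : ℂ := ((‖x - s‖⁻¹ : ℝ) : ℂ)

/-- The supremum norm of `f` over a set `A`. -/
def supNormOn (f : E3 → ℂ) (A : Set E3) : ℝ := sSup ((fun x => ‖f x‖) '' A)

/-- The degree-`p` Fourier–Laplace projection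
`F_p f = Σ_{n=0}^p Σ_{m=-n}^n ⟨f, Y_n^m⟩ Y_n^m` of a function on the unit sphere. -/
def fourierProj (p : ℕ) (f : E3 → ℂ) (ξ : E3) : ℂ :=
  ∑ n ∈ Finset.range (p + 1), ∑ m ∈ Finset.Icc (-(n : ℤ)) (n : ℤ),
    sphereIntegral (fun η => f η * (starRingEnd ℂ) (sphHarm n m η)) * sphHarm n m ξ

/-- The Lebesgue constant `Λ_p`: the operator norm of the Fourier–Laplace projection
`F_p` on `C(S²)`, i.e. the least admissible constant in `‖F_p f‖_∞ ≤ Λ ‖f‖_∞`. -/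
def lebesgueConst (p : ℕ) : ℝ :=
  sInf {Λ : ℝ | 0 ≤ Λ ∧ ∀ f : E3 → ℂ, ContinuousOn f S2 →
    ∀ ξ ∈ S2, ‖fourierProj p f ξ‖ ≤ Λ * supNormOn f S2}

/-- The `ν`-th term `S^R_{n,ν}(c,t)` of the local expansion of the regular solid
harmonic `R_n^0` about `c`, from the addition theorem for regular solid harmonics. -/
def termSR (n ν : ℕ) (c t : E3) : ℂ :=
  ((normA n 0 : ℝ) : ℂ) *
    ∑ μ ∈ (Finset.Icc (-(ν : ℤ)) (ν : ℤ) ∩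
        Finset.Icc (-((n - ν : ℕ) : ℤ)) ((n - ν : ℕ) : ℤ)),
      ((n.choose ((ν : ℤ) + μ).toNat : ℝ) : ℂ) *
        (solidR (n - ν) (-μ) c * solidR ν μ (t - c)) /
          (((normA (n - ν) (-μ) : ℝ) : ℂ) * ((normA ν μ : ℝ) : ℂ))

/-- The `ν`-th term `S^I_{n,ν}(c,t)` of the local expansion of the irregular solid
harmonic `I_n^0` about `c`, from the addition theorem for irregular solid harmonics. -/
def termSI (n ν : ℕ) (c t : E3) : ℂ :=
  ((normA n 0 : ℝ) : ℂ) *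
    ∑ μ ∈ Finset.Icc (-(ν : ℤ)) (ν : ℤ),
      (-1 : ℂ) ^ ((ν : ℤ) - μ) *
        (((((n : ℤ) + ν - μ).toNat.choose n : ℝ)) : ℂ) *
        (solidI (n + ν) μ c * solidR ν (-μ) (t - c)) /
          (((normA (n + ν) μ : ℝ) : ℂ) * ((normA ν (-μ) : ℝ) : ℂ))

open Polynomial in
theorem iteratedDeriv_eval (q : ℝ[X]) (m : ℕ) :
    iteratedDeriv m (fun t : ℝ => q.eval t) = fun t => (derivative^[m] q).eval t := by
  induction m with
  | zero => simp
  | succ m ih =>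
    rw [iteratedDeriv_succ, ih, Function.iterate_succ_apply']
    funext t
    exact Polynomial.deriv _

open Polynomial in
/-- The Legendre polynomial of degree `k` as an element of `ℝ[X]`, by Rodrigues' formula. -/
def legPoly (k : ℕ) : ℝ[X] :=
  C (1 / ((2 : ℝ) ^ k * k.factorial)) * derivative^[k] ((X ^ 2 - 1) ^ k)

open Polynomial in
theorem legendreP_eq (k : ℕ) : legendreP k = fun t => (legPoly k).eval t := by
  funext t
  have h := congrFun (iteratedDeriv_eval ((X ^ 2 - 1) ^ k) k) t
  simp only [eval_pow, eval_sub, eval_X, eval_one] at h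
  simp [legendreP, legPoly, h]

open Polynomial in
theorem legPoly_eval_one (k : ℕ) : (legPoly k).eval 1 = 1 := by
  have h := aeval_iterate_derivative_self (A := ℝ) ((X ^ 2 - 1 : ℝ[X]) ^ k) k 1
    (p' := (X + 1) ^ k) (by
      rw [Algebra.algebraMap_self, Polynomial.map_id, ← mul_pow]
      congr 1
      simp only [map_one]
      ring)
  rw [coe_aeval_eq_eval] at h
  simp only [legPoly, eval_mul, eval_C, h]
  have : (k.factorial : ℝ) ≠ 0 := by positivity
  simp only [eval_pow, eval_add, eval_X, eval_one, nsmul_eq_mul]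
  norm_num
  field_simp

open Polynomial in
/-- The differential equation satisfied by the derivatives of `u = (X² - 1)^k`, obtained by
differentiating `(X² - 1) u' = 2kXu` repeatedly. -/
theorem rodrigues_ode (k j : ℕ) :
    (X ^ 2 - 1) * derivative^[j + 2] ((X ^ 2 - 1 : ℝ[X]) ^ k)
      + 2 * ((j : ℝ[X]) + 1 - (k : ℝ[X])) * X * derivative^[j + 1] ((X ^ 2 - 1 : ℝ[X]) ^ k)
      + ((j : ℝ[X]) + 1) * ((j : ℝ[X]) - 2 * (k : ℝ[X])) * derivative^[j] ((X ^ 2 - 1 : ℝ[X]) ^ k) = 0 := by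
  induction j with
  | zero =>
    have h : (X ^ 2 - 1) * derivative ((X ^ 2 - 1 : ℝ[X]) ^ k)
        = 2 * (k : ℝ[X]) * X * (X ^ 2 - 1 : ℝ[X]) ^ k := by
      cases k with
      | zero => simp
      | succ k =>
        rw [derivative_pow]
        simp only [Nat.cast_add, Nat.cast_one, map_add, map_natCast, map_one,
          Nat.add_sub_cancel, derivative_sub, derivative_X_pow, derivative_one]
        norm_num
        ring
    have h2 := congrArg derivative h
    simp only [derivative_mul, derivative_sub, derivative_X_pow, derivative_one,
      derivative_natCast, derivative_X, derivative_ofNat] at h2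
    simp only [Function.iterate_succ_apply', Function.iterate_zero, id]
    norm_num at h2 ⊢
    simp only [map_ofNat] at h2
    linear_combination h2
  | succ j ih =>
    have h2 := congrArg derivative ih
    simp only [derivative_mul, derivative_sub, derivative_add, derivative_X_pow, derivative_one,
      derivative_natCast, derivative_X, derivative_ofNat, ← Function.iterate_succ_apply',
      Nat.succ_eq_add_one, derivative_zero] at h2
    push_cast at h2 ⊢
    simp only [map_ofNat] at h2
    linear_combination h2

open Polynomial in
/-- The `m`-th derivative of Legendre's equation. -/
theorem legPoly_ode (k m : ℕ) :
    (1 - X ^ 2) * derivative^[m + 2] (legPoly k)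
      = 2 * ((m : ℝ[X]) + 1) * X * derivative^[m + 1] (legPoly k)
        - ((k : ℝ[X]) - (m : ℝ[X])) * ((k : ℝ[X]) + (m : ℝ[X]) + 1) * derivative^[m] (legPoly k) := by
  have h (i : ℕ) : derivative^[i] (legPoly k) = C (1 / ((2 : ℝ) ^ k * k.factorial)) *
      derivative^[i + k] ((X ^ 2 - 1) ^ k) := by
    rw [legPoly, iterate_derivative_C_mul, Function.iterate_add_apply]
  have h3 := rodrigues_ode k (m + k)
  rw [h, h, h, show m + 2 + k = m + k + 2 by ring, show m + 1 + k = m + k + 1 by ring]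
  push_cast at h3
  linear_combination (-C (1 / ((2 : ℝ) ^ k * k.factorial))) * h3

open Polynomial in
theorem legPoly_iterate_derivative_eq_zero (k : ℕ) : derivative^[k + 1] (legPoly k) = 0 := by
  apply iterate_derivative_eq_zero
  have h1 : (legPoly k).natDegree ≤ (derivative^[k] ((X ^ 2 - 1 : ℝ[X]) ^ k)).natDegree :=
    natDegree_C_mul_le _ _
  have h2 := natDegree_iterate_derivative ((X ^ 2 - 1 : ℝ[X]) ^ k) k
  have h3 : ((X ^ 2 - 1 : ℝ[X]) ^ k).natDegree ≤ k * 2 :=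
    natDegree_pow_le_of_le k (by compute_degree)
  omega

open Polynomial in
/-- The polynomial `(k-m)!/(k+m)! · (1-X²)^m (P_k^{(m)})²`, i.e. `4π/(2k+1) · |Y_k^{±m}|²` as a
function of `X = cos θ`. -/
def sqTerm (k m : ℕ) : ℝ[X] :=
  C (((k - m).factorial : ℝ) / ((k + m).factorial : ℝ)) * (1 - X ^ 2) ^ m *
    (derivative^[m] (legPoly k)) ^ 2

open Polynomial in
/-- By Legendre's equation, the derivative of the partial sums telescopes to a single term. -/
theorem derivative_partial_sum (k j : ℕ) (hj : j ≤ k) :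
    derivative (sqTerm k 0 + 2 * ∑ m ∈ Finset.range j, sqTerm k (m + 1))
      = 2 * C (((k - j).factorial : ℝ) / ((k + j).factorial : ℝ)) * (1 - X ^ 2) ^ j *
          derivative^[j] (legPoly k) * derivative^[j + 1] (legPoly k) := by
  induction j with
  | zero =>
    have : (k.factorial : ℝ) ≠ 0 := by positivity
    simp [sqTerm, this, pow_two, derivative_mul]
    ring
  | succ j ih =>
    have ih := ih (by omega)
    rw [Finset.sum_range_succ, mul_add, ← add_assoc, derivative_add, ih]
    have hc : C (((k - j).factorial : ℝ) / ((k + j).factorial : ℝ)) =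
        C (((k - (j + 1)).factorial : ℝ) / ((k + (j + 1)).factorial : ℝ)) *
          (((k : ℝ[X]) - (j : ℝ[X])) * ((k : ℝ[X]) + (j : ℝ[X]) + 1)) := by
      have e : ((k : ℝ[X]) - (j : ℝ[X])) * ((k : ℝ[X]) + (j : ℝ[X]) + 1) = C (((k : ℝ) - j) * (k + j + 1)) := by simp
      rw [e, ← C_mul]
      congr 1
      obtain ⟨d, rfl⟩ : ∃ d, k = j + 1 + d := ⟨k - (j + 1), by omega⟩
      rw [show j + 1 + d - j = d + 1 by omega, show j + 1 + d - (j + 1) = d by omega,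
        show j + 1 + d + (j + 1) = (j + 1 + d + j) + 1 by ring,
        Nat.factorial_succ, Nat.factorial_succ]
      push_cast
      have h1 : ((j + 1 + d + j).factorial : ℝ) ≠ 0 := by positivity
      have h2 : ((j : ℝ) + 1 + d + j + 1) ≠ 0 := by positivity
      field_simp
      ring
    have ho := legPoly_ode k j
    rw [hc]
    simp only [sqTerm, derivative_mul, derivative_pow_succ, derivative_C, derivative_ofNat,
      derivative_sub, derivative_one, derivative_X,
      ← Function.iterate_succ_apply', Nat.succ_eq_add_one]
    simp only [map_add, map_natCast, map_one, Nat.cast_one, pow_one,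
      show j + 1 + 1 = j + 2 by ring]
    set c := C (((k - (j + 1)).factorial : ℝ) / ((k + (j + 1)).factorial : ℝ))
    linear_combination (2 * c * (1 - X ^ 2) ^ j * derivative^[j + 1] (legPoly k)) * ho

/-- The addition theorem on the diagonal, in terms of Legendre polynomials. -/
theorem sum_sqTerm (k : ℕ) (t : ℝ) :
    (sqTerm k 0).eval t + 2 * ∑ m ∈ Finset.range k, (sqTerm k (m + 1)).eval t = 1 := by
  have h := derivative_partial_sum k k le_rfl
  rw [legPoly_iterate_derivative_eq_zero, mul_zero] at h
  have h2 := Polynomial.eq_C_of_derivative_eq_zero h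
  set q := sqTerm k 0 + 2 * ∑ m ∈ Finset.range k, sqTerm k (m + 1) with hq
  have h3 : q.eval t = q.eval 1 := by rw [h2]; simp
  have hf : (k.factorial : ℝ) ≠ 0 := by positivity
  have h4 : q.eval 1 = 1 := by
    simp [hq, sqTerm, Polynomial.eval_finsetSum, legPoly_eval_one, hf]
  rw [h4] at h3
  simpa [hq, Polynomial.eval_finsetSum] using h3

theorem norm_sq_sphHarm (k : ℕ) (m : ℤ) (hm : m.natAbs ≤ k) (ξ : E3) (hξ : (ξ 2) ^ 2 ≤ 1) :
    4 * π / (2 * (k : ℝ) + 1) * ‖sphHarm k m ξ‖ ^ 2 = (sqTerm k m.natAbs).eval (ξ 2) := by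
  have hexp : ‖Complex.exp ((m : ℂ) *
      ((Complex.arg ((ξ 0 : ℂ) + (ξ 1 : ℂ) * Complex.I) : ℝ) : ℂ) * Complex.I)‖ = 1 := by
    have := Complex.norm_exp_ofReal_mul_I
      ((m : ℝ) * Complex.arg ((ξ 0 : ℂ) + (ξ 1 : ℂ) * Complex.I))
    push_cast at this
    exact this
  have hw : 0 ≤ 1 - (ξ 2) ^ 2 := by linarith
  have hL (j : ℕ) : assocLegendreNat k j (ξ 2) ^ 2 =
      (1 - (ξ 2) ^ 2) ^ j * ((Polynomial.derivative^[j] (legPoly k)).eval (ξ 2)) ^ 2 := by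
    have : ((1 - (ξ 2) ^ 2) ^ ((j : ℝ) / 2)) ^ 2 = (1 - (ξ 2) ^ 2) ^ j := by
      rw [← Real.rpow_natCast, ← Real.rpow_mul hw, ← Real.rpow_natCast _ j]
      congr 1
      push_cast
      ring
    rw [assocLegendreNat, legendreP_eq, iteratedDeriv_eval, mul_pow, mul_pow, this, ← pow_mul,
      mul_comm j 2, pow_mul]
    simp
  rw [sphHarm, norm_mul, norm_mul, hexp, mul_one, Complex.norm_real, Complex.norm_real, mul_pow,
    Real.norm_eq_abs, Real.norm_eq_abs, sq_abs, sq_abs, normA, Real.sq_sqrt (by positivity)]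
  have h1 : (2 * (k : ℝ) + 1) ≠ 0 := by positivity
  have hpi := Real.pi_ne_zero
  simp only [sqTerm, Polynomial.eval_mul, Polynomial.eval_C, Polynomial.eval_pow,
    Polynomial.eval_sub, Polynomial.eval_one, Polynomial.eval_X]
  rw [mul_assoc _ ((1 - (ξ 2) ^ 2) ^ m.natAbs), ← hL]
  have hf1 : ((k + m.natAbs).factorial : ℝ) ≠ 0 := by positivity
  have hf2 : ((k - m.natAbs).factorial : ℝ) ≠ 0 := by positivity
  by_cases h0 : 0 ≤ m
  · rw [assocLegendre, if_pos h0, show ((k : ℤ) - m).toNat = k - m.natAbs by omega,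
      show ((k : ℤ) + m).toNat = k + m.natAbs by omega, show m.toNat = m.natAbs by omega]
    field_simp
  · rw [assocLegendre, if_neg h0, show ((k : ℤ) - m).toNat = k + m.natAbs by omega,
      show ((k : ℤ) + m).toNat = k - m.natAbs by omega, show (-m).toNat = m.natAbs by omega,
      mul_pow, mul_pow, ← pow_mul, mul_comm m.natAbs 2, pow_mul]
    norm_num
    field_simp

theorem sum_norm_sq_sphHarm (k : ℕ) (ξ : E3) (hξ : (ξ 2) ^ 2 ≤ 1) :
    ∑ m ∈ Finset.Icc (-(k : ℤ)) (k : ℤ),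
      4 * π / (2 * (k : ℝ) + 1) * ‖sphHarm k (-m) ξ‖ ^ 2 = 1 := by
  have h : ∀ m ∈ Finset.Icc (-(k : ℤ)) (k : ℤ),
      4 * π / (2 * (k : ℝ) + 1) * ‖sphHarm k (-m) ξ‖ ^ 2 = (sqTerm k m.natAbs).eval (ξ 2) := by
    intro m hm
    rw [Finset.mem_Icc] at hm
    rw [norm_sq_sphHarm k (-m) (by omega) ξ hξ, Int.natAbs_neg]
  rw [Finset.sum_congr rfl h, Finset.sum_Icc_of_even_eq_range
    (f := fun m : ℤ => (sqTerm k m.natAbs).eval (ξ 2)) (fun m => by simp),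
    Finset.sum_range_succ', ← sum_sqTerm k (ξ 2)]
  simp only [nsmul_eq_mul, Int.natAbs_natCast, Int.natAbs_zero, Nat.cast_zero]
  push_cast
  ring

/-- One step of log-concavity of `j ↦ C(n,j)`: moving two indices apart lowers the product. -/
theorem choose_mul_choose_step (n a b : ℕ) (hab : a ≤ b) :
    n.choose a * n.choose (b + 1) ≤ n.choose (a + 1) * n.choose b := by
  refine Nat.le_of_mul_le_mul_right ?_ (Nat.succ_pos b)
  calc n.choose a * n.choose (b + 1) * (b + 1)
      = n.choose a * n.choose b * (n - b) := by
        rw [mul_assoc, Nat.choose_succ_right_eq, mul_assoc]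
    _ ≤ n.choose a * n.choose b * (n - a) := by gcongr
    _ = n.choose (a + 1) * n.choose b * (a + 1) := by
        rw [mul_right_comm, ← Nat.choose_succ_right_eq, mul_right_comm]
    _ ≤ n.choose (a + 1) * n.choose b * (b + 1) := by gcongr

theorem choose_mul_choose_le (n ν j : ℕ) (hj : j ≤ ν) :
    n.choose (ν - j) * n.choose (ν + j) ≤ n.choose ν ^ 2 := by
  induction j with
  | zero => simp [pow_two]
  | succ j ih =>
    have h := choose_mul_choose_step n (ν - (j + 1)) (ν + j) (by omega)
    rw [show ν - (j + 1) + 1 = ν - j by omega] at h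
    exact h.trans (ih (by omega))

/-- For `0 ≤ ν ≤ n` and `x ≠ 0`,
`Σ_μ (4π/(2(n−ν)+1)) C(n,ν−μ) C(n,ν+μ) ‖x‖^{2(n−ν)} |Y_{n−ν}^{−μ}(x/‖x‖)|²
  ≤ (C(n,ν) ‖x‖^{n−ν})²`. -/
theorem statement16 (n ν : ℕ) (hν : ν ≤ n) (x : E3) (hx : x ≠ 0) :
    ∑ μ ∈ Finset.Icc (max (-(ν : ℤ)) (-((n - ν : ℕ) : ℤ)))
        (min (ν : ℤ) ((n - ν : ℕ) : ℤ)),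
      (4 * π / (2 * ((n - ν : ℕ) : ℝ) + 1)) *
        (n.choose ((ν : ℤ) - μ).toNat : ℝ) * (n.choose ((ν : ℤ) + μ).toNat : ℝ) *
        ‖x‖ ^ (2 * (n - ν)) * ‖sphHarm (n - ν) (-μ) (‖x‖⁻¹ • x)‖ ^ 2 ≤
      ((n.choose ν : ℝ) * ‖x‖ ^ (n - ν)) ^ 2 := by
  set k := n - ν with hk
  set ξ : E3 := ‖x‖⁻¹ • x with hξ
  have hξ2 : (ξ 2) ^ 2 ≤ 1 := by
    have h1 : ‖ξ‖ = 1 := norm_smul_inv_norm (𝕜 := ℝ) hx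
    have h2 : |ξ 2| ≤ 1 := by
      have := PiLp.norm_apply_le ξ 2
      rwa [h1, Real.norm_eq_abs] at this
    exact (sq_le_one_iff_abs_le_one _).2 h2
  have hterm (μ : ℤ) (hμ : μ.natAbs ≤ ν) :
      (n.choose ((ν : ℤ) - μ).toNat : ℝ) * (n.choose ((ν : ℤ) + μ).toNat : ℝ)
        ≤ (n.choose ν : ℝ) ^ 2 := by
    have h := choose_mul_choose_le n ν μ.natAbs hμ
    rcases le_total 0 μ with h0 | h0
    · rw [show ((ν : ℤ) - μ).toNat = ν - μ.natAbs by omega,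
        show ((ν : ℤ) + μ).toNat = ν + μ.natAbs by omega]
      exact_mod_cast h
    · rw [show ((ν : ℤ) - μ).toNat = ν + μ.natAbs by omega,
        show ((ν : ℤ) + μ).toNat = ν - μ.natAbs by omega, mul_comm]
      exact_mod_cast h
  calc _ ≤ ∑ μ ∈ Finset.Icc (max (-(ν : ℤ)) (-(k : ℤ))) (min (ν : ℤ) (k : ℤ)),
        ((n.choose ν : ℝ) * ‖x‖ ^ k) ^ 2 *
          (4 * π / (2 * (k : ℝ) + 1) * ‖sphHarm k (-μ) ξ‖ ^ 2) := by
        refine Finset.sum_le_sum fun μ hμ => ?_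
        rw [Finset.mem_Icc] at hμ
        have h := hterm μ (by omega)
        have hp : 0 ≤ ‖x‖ ^ (2 * k) * (4 * π / (2 * (k : ℝ) + 1) * ‖sphHarm k (-μ) ξ‖ ^ 2) := by
          positivity
        have e : (‖x‖ ^ k) ^ 2 = ‖x‖ ^ (2 * k) := by rw [← pow_mul, mul_comm]
        rw [mul_pow, e]
        linarith [mul_le_mul_of_nonneg_right h hp]
    _ ≤ ∑ μ ∈ Finset.Icc (-(k : ℤ)) (k : ℤ),
        ((n.choose ν : ℝ) * ‖x‖ ^ k) ^ 2 *
          (4 * π / (2 * (k : ℝ) + 1) * ‖sphHarm k (-μ) ξ‖ ^ 2) :=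
        Finset.sum_le_sum_of_subset_of_nonneg
          (Finset.Icc_subset_Icc (le_max_right _ _) (min_le_right _ _))
          fun _ _ _ => by positivity
    _ = _ := by rw [← Finset.mul_sum, sum_norm_sq_sphHarm k ξ hξ2, mul_one]

end Paper
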